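/- arXiv:2603.28392 — 4 statements merged into one kernel-verified Lean document; each statement's English description precedes it below -/
import Mathlib

section
/- Let G be a group acting on sets Z and Y, and let ξ : Z → Y be a surjective G-equivariant map. Assume that Y has only finitely many G-orbits. Then the following are equivalent: (i) ξ has homogeneous fibers, i.e., for every y ∈ Y the stabilizer subgroup G^y of y acts transitively on the fiber ξ⁻¹(y); (ii) the number of G-orbits of Z equals the number of G-orbits of Y. -/
/-!
An equivariant map `ξ : Z → Y` induces a map `orbitMap` from the `G`-orbits of `Z` to those of `Y`,
which is surjective because `ξ` is. The fibers of `ξ` are homogeneous exactly when `orbitMap` is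
injective: if `ξ z = ξ z'` and `g • z = z'`, then `g` automatically stabilizes `ξ z`, and conversely
two points with images in one orbit can be translated into the same fiber. As `Y` has finitely many
orbits, the surjection `orbitMap` is injective if and only if the numbers of orbits agree.
-/

/-- The map on orbit sets induced by an equivariant map. -/
def orbitMap {G Z Y : Type*} [Group G] [MulAction G Z] [MulAction G Y]
    (ξ : Z → Y) (hequiv : ∀ (g : G) (z : Z), ξ (g • z) = g • ξ z) :
    MulAction.orbitRel.Quotient G Z → MulAction.orbitRel.Quotient G Y :=
  Quotient.map' ξ (by
    rintro _ z ⟨g, rfl⟩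
    exact ⟨g, (hequiv g z).symm⟩)

theorem orbitMap_surjective {G Z Y : Type*} [Group G] [MulAction G Z] [MulAction G Y]
    (ξ : Z → Y) (hsurj : Function.Surjective ξ)
    (hequiv : ∀ (g : G) (z : Z), ξ (g • z) = g • ξ z) :
    Function.Surjective (orbitMap ξ hequiv) := by
  intro q
  induction q using Quotient.inductionOn' with
  | h y =>
    obtain ⟨z, rfl⟩ := hsurj y
    exact ⟨Quotient.mk'' z, rfl⟩

theorem homogeneous_fibers_iff_orbitMap_injective
    {G Z Y : Type*} [Group G] [MulAction G Z] [MulAction G Y]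
    (ξ : Z → Y) (hequiv : ∀ (g : G) (z : Z), ξ (g • z) = g • ξ z) :
    (∀ (y : Y) (z z' : Z), ξ z = y → ξ z' = y →
        ∃ g ∈ MulAction.stabilizer G y, g • z = z') ↔
      Function.Injective (orbitMap ξ hequiv) := by
  constructor
  · intro h a b hab
    induction a using Quotient.inductionOn' with
    | h a =>
    induction b using Quotient.inductionOn' with
    | h b =>
    obtain ⟨g, hg⟩ : ξ a ∈ MulAction.orbit G (ξ b) := Quotient.exact' hab
    -- `g • b` lies in the same fiber as `a`.
    obtain ⟨k, -, hk⟩ := h (ξ a) (g • b) a ((hequiv g b).trans hg) rfl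
    exact Quotient.sound' ⟨k * g, by simpa [mul_smul] using hk⟩
  · rintro hinj y z z' rfl hz'
    have hq : (Quotient.mk'' z' : MulAction.orbitRel.Quotient G Z) = Quotient.mk'' z :=
      hinj (congrArg Quotient.mk'' hz')
    obtain ⟨g, rfl⟩ : z' ∈ MulAction.orbit G z := Quotient.exact' hq
    exact ⟨g, (hequiv g z).symm.trans hz', rfl⟩

/-- **Proposition 3.1.** Let `G` be a group acting on sets `Z` and `Y`, and let `ξ : Z → Y`
be a surjective `G`-equivariant map.  Assume `Y` has only finitely many `G`-orbits.  Then
`ξ` has homogeneous fibers (for every `y ∈ Y` the stabilizer of `y` acts transitively on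
`ξ⁻¹(y)`) if and only if the number of `G`-orbits of `Z` equals the number of `G`-orbits
of `Y`. -/
theorem homogeneous_fibers_iff_card_orbits_eq
    {G Z Y : Type*} [Group G] [MulAction G Z] [MulAction G Y]
    (ξ : Z → Y) (hsurj : Function.Surjective ξ)
    (hequiv : ∀ (g : G) (z : Z), ξ (g • z) = g • ξ z)
    (hfin : Finite (MulAction.orbitRel.Quotient G Y)) :
    (∀ (y : Y) (z z' : Z), ξ z = y → ξ z' = y →
        ∃ g ∈ MulAction.stabilizer G y, g • z = z') ↔
      Nat.card (MulAction.orbitRel.Quotient G Z) =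
        Nat.card (MulAction.orbitRel.Quotient G Y) := by
  rw [homogeneous_fibers_iff_orbitMap_injective ξ hequiv]
  have hs := orbitMap_surjective ξ hsurj hequiv
  constructor
  · exact fun hinj => Nat.card_congr (Equiv.ofBijective _ ⟨hinj, hs⟩)
  · intro hcard a
    -- `Nat.card` is `0` on infinite types, so the finiteness of the orbit set of `Z` has to be
    -- read off from the count being nonzero, `a` witnessing that `Y` has an orbit.
    have : Nonempty (MulAction.orbitRel.Quotient G Y) := ⟨orbitMap ξ hequiv a⟩
    have : Finite (MulAction.orbitRel.Quotient G Z) :=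
      Nat.finite_of_card_ne_zero (hcard ▸ Nat.card_pos.ne')
    exact fun _ hab => (hs.bijective_of_nat_card_le hcard.le).injective hab
end

section
/- Fix n = p + q and let K ⊆ GL(n, ℂ) be the subgroup of invertible matrices g that satisfy g·E⁺ = E⁺ and g·E⁻ = E⁻, where E⁺ is the span of the first p standard basis vectors of ℂⁿ and E⁻ is the span of the last q standard basis vectors (so K ≅ GL(p, ℂ) × GL(q, ℂ)). Then for every chain of ℂ-subspaces 0 ⊊ F₁ ⊊ F₂ ⊊ ⋯ ⊊ F_k ⊊ ℂⁿ, the stabilizer { g ∈ K : g F_j = F_j for all j } is a connected subset of GL(n, ℂ) in its standard topology. -/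
/-!
The matrices mapping each of `E⁺`, `E⁻`, `F₁, …, F_k` into itself form a linear subspace of the
space of all matrices, and the stabilizer consists of the invertible elements of that subspace. So
for `g` in the stabilizer the complex line `t ↦ (1 - t) • 1 + t • g` stays in the stabilizer as
long as its determinant does not vanish. The determinant is a polynomial in `t` taking the value
`1` at `t = 0`, hence has finitely many zeros, and the complement of a finite set in `ℂ` is
connected. Thus `1` and `g` lie in a common connected subset of the stabilizer.
-/

/-- `E⁺`: the span of the first `p` standard basis vectors of `ℂⁿ` (`n = p + q`). -/
noncomputable def Eplus (p q : ℕ) : Submodule ℂ (Fin (p + q) → ℂ) :=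
  Submodule.span ℂ {v | ∃ i : Fin (p + q), i.val < p ∧ v = Pi.single i 1}

/-- `E⁻`: the span of the last `q` standard basis vectors of `ℂⁿ` (`n = p + q`). -/
noncomputable def Eminus (p q : ℕ) : Submodule ℂ (Fin (p + q) → ℂ) :=
  Submodule.span ℂ {v | ∃ i : Fin (p + q), p ≤ i.val ∧ v = Pi.single i 1}

/-- The point of parameter `t` on the complex line through `1` (at `t = 0`) and `g`
(at `t = 1`). -/
def lineMatrix {n : ℕ} (g : Matrix (Fin n) (Fin n) ℂ) (t : ℂ) : Matrix (Fin n) (Fin n) ℂ :=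
  (1 - t) • (1 : Matrix (Fin n) (Fin n) ℂ) + t • g

lemma continuous_lineMatrix {n : ℕ} (g : Matrix (Fin n) (Fin n) ℂ) :
    Continuous (lineMatrix g) := by
  unfold lineMatrix
  fun_prop

lemma finite_det_lineMatrix_eq_zero {n : ℕ} (g : Matrix (Fin n) (Fin n) ℂ) :
    {t : ℂ | (lineMatrix g t).det = 0}.Finite := by
  let P : Polynomial ℂ := Matrix.det
    ((1 - Polynomial.X : Polynomial ℂ) • (1 : Matrix (Fin n) (Fin n) (Polynomial ℂ)) +
      (Polynomial.X : Polynomial ℂ) • g.map Polynomial.C)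
  have hP : ∀ t, P.eval t = (lineMatrix g t).det := by
    intro t
    change Polynomial.evalRingHom t P = _
    rw [RingHom.map_det]
    congr 1
    ext i j
    by_cases h : i = j <;> simp [lineMatrix, h] <;> ring
  have hP0 : P ≠ 0 := by
    intro h
    have h0 := hP 0
    simp [h, lineMatrix] at h0
  refine (Polynomial.finite_setOfPred_isRoot hP0).subset ?_
  intro t ht
  simpa [Polynomial.IsRoot, hP] using ht

lemma map_lineMatrix_eq {n : ℕ} {g : Matrix (Fin n) (Fin n) ℂ} {t : ℂ}
    (ht : (lineMatrix g t).det ≠ 0) {W : Submodule ℂ (Fin n → ℂ)}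
    (hW : Submodule.map (Matrix.toLin' g) W = W) :
    Submodule.map (Matrix.toLin' (lineMatrix g t)) W = W := by
  have hinj : Function.Injective (Matrix.toLin' (lineMatrix g t)) := by
    have := Matrix.mulVec_injective_of_isUnit
      ((Matrix.isUnit_iff_isUnit_det _).2 (isUnit_iff_ne_zero.2 ht))
    simpa [Function.Injective] using this
  refine Submodule.eq_of_le_of_finrank_eq ?_ 
    (LinearEquiv.finrank_eq (Submodule.equivMapOfInjective _ hinj W)).symm
  rintro _ ⟨v, hv, rfl⟩
  have hgv : Matrix.toLin' g v ∈ W := hW ▸ Submodule.mem_map_of_mem hv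
  have : Matrix.toLin' (lineMatrix g t) v = (1 - t) • v + t • Matrix.toLin' g v := by
    simp [lineMatrix]
  rw [this]
  exact W.add_mem (W.smul_mem _ hv) (W.smul_mem _ hgv)

/-- The invertible points of the line through `1` and `g` form a connected subset of `GL(n, ℂ)`,
being a continuous image of the complement of a finite subset of `ℂ`. -/
lemma isPreconnected_range_line {n : ℕ} (g : Matrix (Fin n) (Fin n) ℂ) :
    IsPreconnected (Set.range fun t : ↥({t : ℂ | (lineMatrix g t).det = 0}ᶜ) =>
      Matrix.GeneralLinearGroup.mkOfDetNeZero (lineMatrix g t) t.2) := by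
  have hconn : IsConnected ({t : ℂ | (lineMatrix g t).det = 0}ᶜ) :=
    (finite_det_lineMatrix_eq_zero g).countable.isConnected_compl_of_one_lt_rank
      (by rw [Complex.rank_real_complex]; norm_num)
  have := isPreconnected_iff_preconnectedSpace.1 hconn.isPreconnected
  refine isPreconnected_range (Units.continuous_iff.2 ⟨?_, ?_⟩)
  · exact (continuous_lineMatrix g).comp continuous_subtype_val
  · have hL : Continuous fun t : ↥({t : ℂ | (lineMatrix g t).det = 0}ᶜ) => lineMatrix g t :=
      (continuous_lineMatrix g).comp continuous_subtype_val
    have : Continuous fun t : ↥({t : ℂ | (lineMatrix g t).det = 0}ᶜ) =>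
        (lineMatrix g t).det⁻¹ • (lineMatrix g t).adjugate :=
      (hL.matrix_det.inv₀ fun t => t.2).smul hL.matrix_adjugate
    refine this.congr fun t => ?_
    rw [Matrix.coe_units_inv, Matrix.inv_def, Ring.inverse_eq_inv']
    rfl

/-- **Lemma 4.1.**  Let `n = p + q` and let `K ≅ GL(p,ℂ) × GL(q,ℂ)` be the subgroup of
`GL(n,ℂ)` of elements preserving both `E⁺` and `E⁻`.  For every chain of subspaces
`0 ⊊ F₁ ⊊ ⋯ ⊊ F_k ⊊ ℂⁿ`, the stabilizer in `K` of the chain is a connected subset of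
`GL(n,ℂ)` in its standard topology. -/
theorem stabilizer_of_flag_in_K_isConnected (p q : ℕ) (k : ℕ)
    (F : Fin k → Submodule ℂ (Fin (p + q) → ℂ))
    (hmono : StrictMono F)
    (hbot : ∀ j, ⊥ < F j) (htop : ∀ j, F j < ⊤) :
    IsConnected {g : GL (Fin (p + q)) ℂ |
      Submodule.map (Matrix.toLin' (g : Matrix (Fin (p + q)) (Fin (p + q)) ℂ))
          (Eplus p q) = Eplus p q ∧
      Submodule.map (Matrix.toLin' (g : Matrix (Fin (p + q)) (Fin (p + q)) ℂ))
          (Eminus p q) = Eminus p q ∧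
      ∀ j, Submodule.map (Matrix.toLin' (g : Matrix (Fin (p + q)) (Fin (p + q)) ℂ))
          (F j) = F j} := by
  refine ⟨⟨1, by simp⟩, isPreconnected_of_forall 1 ?_⟩
  intro g hg
  have hconn := isPreconnected_range_line (g : Matrix (Fin (p + q)) (Fin (p + q)) ℂ)
  refine ⟨_, ?_, Set.mem_range.2 ⟨⟨0, by simp [lineMatrix]⟩, ?_⟩,
    Set.mem_range.2 ⟨⟨1, ?_⟩, ?_⟩, hconn⟩
  · rintro _ ⟨t, rfl⟩
    exact ⟨map_lineMatrix_eq t.2 hg.1, map_lineMatrix_eq t.2 hg.2.1,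
      fun j => map_lineMatrix_eq t.2 (hg.2.2 j)⟩
  · ext1
    simp [lineMatrix, Matrix.GeneralLinearGroup.mkOfDetNeZero]
  · ext1
    simp [lineMatrix, Matrix.GeneralLinearGroup.mkOfDetNeZero]
  · simpa [lineMatrix] using g.det_ne_zero
end

section
/- Let V be an n-dimensional ℂ-vector space, let F : 0 = F⁰ ⊂ F¹ ⊂ ⋯ ⊂ Fⁿ = V be a complete flag (dim F^k = k for all k), and let I ⊆ {1,…,n−1} be a set of indices that are pairwise at distance at least 2. Then the set of complete flags E in V satisfying E^k = F^k for all k ∉ I is in bijection with the product ∏_{i ∈ I} ℙ(F^{i+1}/F^{i−1}), via E ↦ (E^i/F^{i−1})_{i ∈ I}; in particular, since each F^{i+1}/F^{i−1} is 2-dimensional, this set is in bijection with (ℙ¹(ℂ))^{|I|}. -/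
/-!
Since the indices in `I` are pairwise at distance at least `2`, the neighbours `i - 1` and `i + 1`
of an `i ∈ I` lie outside `I`. A complete flag `E` agreeing with `F` outside `I` is therefore
constrained at `i` only by `F^{i-1} ⊆ E^i ⊆ F^{i+1}` and `dim E^i = i`, independently for each
`i ∈ I`. By the correspondence between subspaces of `V / F^{i-1}` and subspaces of `V` containing
`F^{i-1}`, such an `E^i` is the same as a line in `F^{i+1} / F^{i-1}`: `flag_image_isLine` is one
direction, and `isCompleteFlag_modifyFlag` the other.

For the second bijection, `F^{i+1} / F^{i-1}` has dimension `2`, so a linear isomorphism with `ℂ²`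
turns its lines into points of `ℙ¹(ℂ)` (`nonempty_lines_equiv_projectiveLine`).
-/

/-- A complete flag `0 = F⁰ ⊂ F¹ ⊂ ⋯ ⊂ Fⁿ = V` in an `n`-dimensional `ℂ`-vector space,
encoded as a monotone `ℕ`-indexed family with `dim F^k = min k n` (so `F^k` is
`k`-dimensional for `k ≤ n`). -/
def IsCompleteFlag (n : ℕ) {V : Type*} [AddCommGroup V] [Module ℂ V]
    (F : ℕ → Submodule ℂ V) : Prop :=
  Monotone F ∧ ∀ k, Module.finrank ℂ (F k) = min k n

section FlagFibre

variable {V : Type*} [AddCommGroup V] [Module ℂ V]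

theorem finrank_map_mkQ_add [FiniteDimensional ℂ V] {G H : Submodule ℂ V} (h : G ≤ H) :
    Module.finrank ℂ (H.map G.mkQ) + Module.finrank ℂ G = Module.finrank ℂ H := by
  have key := LinearMap.finrank_range_add_finrank_ker (G.mkQ.comp H.subtype)
  rw [LinearMap.range_comp, Submodule.range_subtype, LinearMap.ker_comp, Submodule.ker_mkQ] at key
  rw [← key, (Submodule.comapSubtypeEquivOfLe h).finrank_eq]

theorem finrank_comap_mkQ [FiniteDimensional ℂ V] (G : Submodule ℂ V) (W : Submodule ℂ (V ⧸ G)) :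
    Module.finrank ℂ (W.comap G.mkQ) = Module.finrank ℂ W + Module.finrank ℂ G := by
  have h := finrank_map_mkQ_add (Submodule.le_comap_mkQ G W)
  rwa [Submodule.map_comap_eq_of_surjective G.mkQ_surjective, eq_comm] at h

/-- The lines contained in a two-dimensional subspace `U` form a projective line. -/
theorem nonempty_lines_equiv_projectiveLine {Q : Type*} [AddCommGroup Q] [Module ℂ Q]
    [FiniteDimensional ℂ Q] (U : Submodule ℂ Q) (hU : Module.finrank ℂ U = 2) :
    Nonempty ({W : Submodule ℂ Q // W ≤ U ∧ Module.finrank ℂ W = 1} ≃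
      Projectivization ℂ (Fin 2 → ℂ)) := by
  let φ : U ≃ₗ[ℂ] (Fin 2 → ℂ) := LinearEquiv.ofFinrankEq _ _ (by simp [hU])
  have toSub : {L : Submodule ℂ U // Module.finrank ℂ L = 1} ≃
      {W : Submodule ℂ Q // W ≤ U ∧ Module.finrank ℂ W = 1} :=
    { toFun := fun L => ⟨L.1.map U.subtype, Submodule.map_subtype_le _ _, by
        rw [Submodule.finrank_map_subtype_eq, L.2]⟩
      invFun := fun W => ⟨W.1.comap U.subtype, by
        rw [(Submodule.comapSubtypeEquivOfLe W.2.1).finrank_eq, W.2.2]⟩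
      left_inv := fun L => Subtype.ext
        (Submodule.comap_map_eq_of_injective U.subtype_injective L.1)
      right_inv := fun W => Subtype.ext (by
        simp [Submodule.map_comap_subtype, W.2.1]) }
  have lines : {L : Submodule ℂ U // Module.finrank ℂ L = 1} ≃
      {L : Submodule ℂ (Fin 2 → ℂ) // Module.finrank ℂ L = 1} :=
    (Submodule.orderIsoMapComap φ).toEquiv.subtypeEquiv (fun L => by
      change _ ↔ Module.finrank ℂ (L.map (φ : U →ₗ[ℂ] (Fin 2 → ℂ))) = 1
      rw [LinearEquiv.finrank_map_eq])
  exact ⟨toSub.symm.trans (lines.trans (Projectivization.equivSubmodule ℂ (Fin 2 → ℂ)).symm)⟩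

variable {n : ℕ} {F : ℕ → Submodule ℂ V} {I : Finset ℕ}

theorem flag_image_isLine [FiniteDimensional ℂ V] (hF : IsCompleteFlag n F)
    (hI : ∀ i ∈ I, 1 ≤ i ∧ i + 1 ≤ n)
    (hsep : ∀ i ∈ I, ∀ j ∈ I, i ≠ j → i + 2 ≤ j ∨ j + 2 ≤ i)
    {E : ℕ → Submodule ℂ V} (hE : IsCompleteFlag n E) (hEF : ∀ k ∉ I, E k = F k)
    {i : ℕ} (hi : i ∈ I) :
    F (i - 1) ≤ E i ∧ (E i).map (F (i - 1)).mkQ ≤ (F (i + 1)).map (F (i - 1)).mkQ ∧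
      Module.finrank ℂ ((E i).map (F (i - 1)).mkQ) = 1 := by
  have hin := hI i hi
  have h1 : i - 1 ∉ I := fun h => by have := hsep i hi _ h; omega
  have h2 : i + 1 ∉ I := fun h => by have := hsep i hi _ h; omega
  have hlow : F (i - 1) ≤ E i := hEF _ h1 ▸ hE.1 (Nat.sub_le i 1)
  refine ⟨hlow, Submodule.map_mono (hEF _ h2 ▸ hE.1 (Nat.le_succ i)), ?_⟩
  have := finrank_map_mkQ_add hlow
  rw [hF.2, hE.2] at this
  omega

open Classical in
/-- The family obtained from `F` by replacing, for each `i ∈ I`, the space `F^i` by the preimage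
in `V` of a chosen subspace of `V / F^{i-1}`. -/
noncomputable def modifyFlag (F : ℕ → Submodule ℂ V) (I : Finset ℕ)
    (W : ∀ i : I, Submodule ℂ (V ⧸ F ((i : ℕ) - 1))) (k : ℕ) : Submodule ℂ V :=
  if h : k ∈ I then (W ⟨k, h⟩).comap (F (k - 1)).mkQ else F k

theorem modifyFlag_of_mem (W : ∀ i : I, Submodule ℂ (V ⧸ F ((i : ℕ) - 1))) {k : ℕ} (h : k ∈ I) :
    modifyFlag F I W k = (W ⟨k, h⟩).comap (F (k - 1)).mkQ := dif_pos h

theorem modifyFlag_of_notMem (W : ∀ i : I, Submodule ℂ (V ⧸ F ((i : ℕ) - 1))) {k : ℕ}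
    (h : k ∉ I) : modifyFlag F I W k = F k := dif_neg h

theorem isCompleteFlag_modifyFlag [FiniteDimensional ℂ V] (hF : IsCompleteFlag n F)
    (hI : ∀ i ∈ I, 1 ≤ i ∧ i + 1 ≤ n)
    (hsep : ∀ i ∈ I, ∀ j ∈ I, i ≠ j → i + 2 ≤ j ∨ j + 2 ≤ i)
    (W : ∀ i : I, Submodule ℂ (V ⧸ F ((i : ℕ) - 1)))
    (hW : ∀ i : I, W i ≤ (F ((i : ℕ) + 1)).map (F ((i : ℕ) - 1)).mkQ ∧
      Module.finrank ℂ (W i) = 1) :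
    IsCompleteFlag n (modifyFlag F I W) := by
  refine ⟨monotone_nat_of_le_succ fun k => ?_, fun k => ?_⟩
  · by_cases hk : k ∈ I
    · have hk' : k + 1 ∉ I := fun h => by have := hsep k hk _ h; omega
      rw [modifyFlag_of_mem W hk, modifyFlag_of_notMem W hk']
      refine (Submodule.comap_mono (hW ⟨k, hk⟩).1).trans ?_
      rw [Submodule.comap_map_mkQ]
      exact sup_le (hF.1 (by omega)) le_rfl
    · rw [modifyFlag_of_notMem W hk]
      by_cases hk' : k + 1 ∈ I
      · rw [modifyFlag_of_mem W hk']
        exact Submodule.le_comap_mkQ (F (k + 1 - 1)) _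
      · rw [modifyFlag_of_notMem W hk']
        exact hF.1 (Nat.le_succ k)
  · by_cases hk : k ∈ I
    · have := hI k hk
      rw [modifyFlag_of_mem W hk, finrank_comap_mkQ, (hW ⟨k, hk⟩).2, hF.2]
      omega
    · rw [modifyFlag_of_notMem W hk, hF.2]

end FlagFibre

/-- **Lemma 5.1 (flag-variety realization).**  Let `V` be an `n`-dimensional `ℂ`-vector
space, `F` a complete flag in `V`, and `I ⊆ {1,…,n-1}` a set of indices pairwise at
distance at least `2`.  Then the set of complete flags `E` with `E^k = F^k` for all
`k ∉ I` is in bijection with `∏_{i ∈ I} ℙ(F^{i+1}/F^{i-1})` via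
`E ↦ (E^i/F^{i-1})_{i ∈ I}`; in particular, since each `F^{i+1}/F^{i-1}` is
`2`-dimensional, it is in bijection with `(ℙ¹(ℂ))^{|I|}`. -/
theorem flags_between_equiv_product_of_lines
    {V : Type*} [AddCommGroup V] [Module ℂ V] [FiniteDimensional ℂ V] {n : ℕ}
    (hV : Module.finrank ℂ V = n)
    (F : ℕ → Submodule ℂ V) (hF : IsCompleteFlag n F)
    (I : Finset ℕ) (hI : ∀ i ∈ I, 1 ≤ i ∧ i + 1 ≤ n)
    (hsep : ∀ i ∈ I, ∀ j ∈ I, i ≠ j → i + 2 ≤ j ∨ j + 2 ≤ i) :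
    (∃ e : {E : ℕ → Submodule ℂ V // IsCompleteFlag n E ∧ ∀ k ∉ I, E k = F k} ≃
          (Π i : I, {W : Submodule ℂ (V ⧸ F ((i : ℕ) - 1)) //
            W ≤ Submodule.map (F ((i : ℕ) - 1)).mkQ (F ((i : ℕ) + 1)) ∧
            Module.finrank ℂ W = 1}),
        ∀ E (i : I), ((e E) i : Submodule ℂ (V ⧸ F ((i : ℕ) - 1))) =
          Submodule.map (F ((i : ℕ) - 1)).mkQ ((E : ℕ → Submodule ℂ V) (i : ℕ))) ∧
    Nonempty ({E : ℕ → Submodule ℂ V // IsCompleteFlag n E ∧ ∀ k ∉ I, E k = F k} ≃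
        (I → Projectivization ℂ (Fin 2 → ℂ))) := by
  let e : {E : ℕ → Submodule ℂ V // IsCompleteFlag n E ∧ ∀ k ∉ I, E k = F k} ≃
      (Π i : I, {W : Submodule ℂ (V ⧸ F ((i : ℕ) - 1)) //
        W ≤ Submodule.map (F ((i : ℕ) - 1)).mkQ (F ((i : ℕ) + 1)) ∧
        Module.finrank ℂ W = 1}) :=
    { toFun := fun E i => ⟨(E.1 i).map (F ((i : ℕ) - 1)).mkQ,
        (flag_image_isLine hF hI hsep E.2.1 E.2.2 i.2).2⟩
      invFun := fun W => ⟨modifyFlag F I fun i => (W i).1,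
        isCompleteFlag_modifyFlag hF hI hsep _ fun i => (W i).2,
        fun _ hk => modifyFlag_of_notMem _ hk⟩
      left_inv := fun E => by
        refine Subtype.ext (funext fun k => ?_)
        change modifyFlag F I (fun i => (E.1 i).map (F ((i : ℕ) - 1)).mkQ) k = E.1 k
        by_cases hk : k ∈ I
        · rw [modifyFlag_of_mem _ hk]
          -- The preimage of `E^k / F^{k-1}` is `F^{k-1} + E^k`, and `F^{k-1} ⊆ E^k`.
          refine (Submodule.comap_map_mkQ _ _).trans ?_
          exact sup_eq_right.2 (flag_image_isLine hF hI hsep E.2.1 E.2.2 hk).1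
        · exact (modifyFlag_of_notMem _ hk).trans (E.2.2 k hk).symm
      right_inv := fun W => by
        refine funext fun i => Subtype.ext ?_
        change (modifyFlag F I (fun i => (W i).1) i).map _ = _
        rw [modifyFlag_of_mem _ i.2]
        exact Submodule.map_comap_eq_of_surjective (Submodule.mkQ_surjective _) _ }
  refine ⟨⟨e, fun _ _ => rfl⟩, ?_⟩
  have hdim (i : I) : Module.finrank ℂ
      (Submodule.map (F ((i : ℕ) - 1)).mkQ (F ((i : ℕ) + 1))) = 2 := by
    have := hI i i.2
    have h := finrank_map_mkQ_add (hF.1 (show (i : ℕ) - 1 ≤ (i : ℕ) + 1 by omega))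
    rw [hF.2, hF.2] at h
    omega
  exact ⟨e.trans (Equiv.piCongrRight fun i =>
    (nonempty_lines_equiv_projectiveLine _ (hdim i)).some)⟩
end

section
/- Fix n = p + q = n₁ + ⋯ + n_r with n_j = p_j + q_j and p₁ + ⋯ + p_r = p. Let W(v₀) ⊆ S_n be the set of permutations w such that for each j, exactly p_j of the values w(m), for m in the j-th block of positions {n₁+⋯+n_{j−1}+1, …, n₁+⋯+n_j}, lie in {1,…,p}. Let I be a set of simple transpositions s_i ∈ S_n whose indices are pairwise at distance at least 2, each of which straddles two consecutive blocks of positions (i.e., i = n₁ + ⋯ + n_j for some j). For w ∈ W(v₀) set I_w = { s_i ∈ I : w(i) and w(i+1) are both in {1,…,p} or both in {p+1,…,n} }. Then for every w ∈ W(v₀) and every z in the subgroup W_I generated by I: w z ∈ W(v₀) if and only if z lies in the subgroup W_{I_w} generated by I_w. -/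
/-!
Call a value small if it is `< p`. Since the transpositions in `I` have disjoint supports, an
element `z` of `W_I` acts on each pair `{i, i + 1}`, `i ∈ I`, either trivially or by the swap, and
fixes every other position (`MovesInPairs`). Both sides of the equivalence say that `z` preserves
smallness, i.e. that `w (z m)` is small iff `w m` is small, for every position `m`.

* If `z ∈ W_{I_w}`, smallness is preserved because each generator preserves it; then `w * z` and `w`
  have the same block counts.
* If `w * z ∈ W(v₀)`, then `w` and `w * z` have the same number of small values on every union of
  initial blocks (`Wv_prefix`). For a swapped pair `{i, i + 1}` the positions `≤ i` form such a
  union, and `z` merely replaces `i` by `i + 1` in it, so `w i` and `w (i + 1)` are both small or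
  both not (`small_iff_of_swapped`).
* A `z` that moves positions in pairs and preserves smallness is a product of elements of `I_w`, by
  induction on the size of its support (`mem_closure_of_movesInPairs`).
-/

/-- `blockStart ps qs j = n₁ + ⋯ + n_j` where `n_t = ps t + qs t`: the (0-indexed)
starting position of the `j`-th block (0-indexed). -/
def blockStart (ps qs : ℕ → ℕ) (j : ℕ) : ℕ := ∑ t ∈ Finset.range j, (ps t + qs t)

/-- `W(v₀)`: the set of permutations `w ∈ S_n` such that for each block `j`, exactly
`p_j` of the values of `w` on the positions of the `j`-th block lie in `{1,…,p}`
(0-indexed: have value `< p`). -/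
def Wv (n r p : ℕ) (ps qs : ℕ → ℕ) : Set (Equiv.Perm (Fin n)) :=
  {w | ∀ j < r, (Finset.univ.filter fun m : Fin n =>
      blockStart ps qs j ≤ m.val ∧ m.val < blockStart ps qs (j + 1) ∧
      (w m).val < p).card = ps j}

/-- Each position is either fixed by `z`, or it is one of `i`, `i + 1` for some `i ∈ I` and is sent
by `z` to the other one. For `I` with indices at distance at least `2` this describes the elements
of `W_I`. -/
def MovesInPairs {n : ℕ} (I : Finset ℕ) (z : Equiv.Perm (Fin n)) : Prop :=
  ∀ m, z m = m ∨ ∃ i ∈ I, (m.val = i ∧ (z m).val = i + 1) ∨ (m.val = i + 1 ∧ (z m).val = i)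

lemma MovesInPairs.mul {n : ℕ} {I : Finset ℕ}
    (hdist : ∀ i ∈ I, ∀ j ∈ I, i ≠ j → i + 2 ≤ j ∨ j + 2 ≤ i)
    {x y : Equiv.Perm (Fin n)} (hx : MovesInPairs I x) (hy : MovesInPairs I y) :
    MovesInPairs I (x * y) := by
  intro m
  rw [Equiv.Perm.mul_apply]
  rcases hy m with h | ⟨i, hi, h⟩
  · rw [h]; exact hx m
  · rcases hx (y m) with h' | ⟨j, hj, h'⟩
    · rw [h']; exact Or.inr ⟨i, hi, h⟩
    · -- Distinct pairs are disjoint, so `x` swaps the same pair back.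
      left
      have hij : i = j := by
        by_contra hne
        have := hdist i hi j hj hne
        omega
      apply Fin.ext
      omega

lemma movesInPairs_swap {n : ℕ} {I : Finset ℕ} {i : ℕ} (hi : i ∈ I) (h : i + 1 < n) :
    MovesInPairs I (Equiv.swap (⟨i, by omega⟩ : Fin n) ⟨i + 1, h⟩) := by
  intro m
  by_cases h1 : m = ⟨i, by omega⟩
  · right; refine ⟨i, hi, Or.inl ?_⟩
    subst h1; simp
  by_cases h2 : m = ⟨i + 1, h⟩
  · right; refine ⟨i, hi, Or.inr ?_⟩
    subst h2; simp
  · left; exact Equiv.swap_apply_of_ne_of_ne h1 h2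

lemma movesInPairs_of_mem_closure {n : ℕ} {I : Finset ℕ}
    (hdist : ∀ i ∈ I, ∀ j ∈ I, i ≠ j → i + 2 ≤ j ∨ j + 2 ≤ i) {z : Equiv.Perm (Fin n)}
    (hz : z ∈ Subgroup.closure {σ : Equiv.Perm (Fin n) | ∃ i ∈ I, ∃ h : i + 1 < n,
        σ = Equiv.swap (⟨i, by omega⟩ : Fin n) ⟨i + 1, h⟩}) : MovesInPairs I z := by
  induction hz using Subgroup.closure_induction with
  | mem x hx =>
    obtain ⟨i, hi, h, rfl⟩ := hx
    exact movesInPairs_swap hi h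
  | one => intro m; left; rfl
  | mul x y _ _ hx hy => exact hx.mul hdist hy
  | inv x _ hx =>
    intro m
    rcases hx (x⁻¹ m) with h | ⟨i, hi, h⟩
    · left; simpa using h.symm
    · right
      rw [show x (x⁻¹ m) = m from x.apply_symm_apply m] at h
      exact ⟨i, hi, by omega⟩

/-- The generators of `W_{I_w}`, hence all its elements, only permute positions whose values
under `w` are on the same side of `p`. -/
lemma small_iff_of_mem_closure {n p : ℕ} {I : Finset ℕ} {w z : Equiv.Perm (Fin n)}
    (hz : z ∈ Subgroup.closure {σ : Equiv.Perm (Fin n) | ∃ i ∈ I, ∃ h : i + 1 < n,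
        ((w ⟨i, by omega⟩).val < p ↔ (w ⟨i + 1, h⟩).val < p) ∧
        σ = Equiv.swap (⟨i, by omega⟩ : Fin n) ⟨i + 1, h⟩}) (m : Fin n) :
    (w (z m)).val < p ↔ (w m).val < p := by
  induction hz using Subgroup.closure_induction generalizing m with
  | mem x hx =>
    obtain ⟨i, hi, h, hiff, rfl⟩ := hx
    by_cases h1 : m = ⟨i, by omega⟩
    · subst h1; rw [Equiv.swap_apply_left]; exact hiff.symm
    by_cases h2 : m = ⟨i + 1, h⟩
    · subst h2; rw [Equiv.swap_apply_right]; exact hiff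
    rw [Equiv.swap_apply_of_ne_of_ne h1 h2]
  | one => rfl
  | mul x y _ _ hx hy => rw [Equiv.Perm.mul_apply, hx, hy]
  | inv x _ hx => rw [← hx (x⁻¹ m), show x (x⁻¹ m) = m from x.apply_symm_apply m]

lemma mem_closure_of_movesInPairs {n p : ℕ} {I : Finset ℕ}
    (hdist : ∀ i ∈ I, ∀ j ∈ I, i ≠ j → i + 2 ≤ j ∨ j + 2 ≤ i) {w : Equiv.Perm (Fin n)}
    (z : Equiv.Perm (Fin n)) (hz : MovesInPairs I z)
    (hsmall : ∀ m, (w (z m)).val < p ↔ (w m).val < p) :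
    z ∈ Subgroup.closure {σ : Equiv.Perm (Fin n) | ∃ i ∈ I, ∃ h : i + 1 < n,
        ((w ⟨i, by omega⟩).val < p ↔ (w ⟨i + 1, h⟩).val < p) ∧
        σ = Equiv.swap (⟨i, by omega⟩ : Fin n) ⟨i + 1, h⟩} := by
  induction hc : z.support.card using Nat.strong_induction_on generalizing z with
  | _ c ih =>
    by_cases h1 : z = 1
    · rw [h1]; exact Subgroup.one_mem _
    obtain ⟨m, hm⟩ : ∃ m, z m ≠ m := by
      by_contra! hcon
      exact h1 (Equiv.ext hcon)
    -- The swap of a moved position `m` with its image is a generator; cancelling it from `z`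
    -- shrinks the support.
    obtain ⟨i, hi, hmi⟩ := (hz m).resolve_left hm
    have h : i + 1 < n := by have := m.isLt; have := (z m).isLt; omega
    have hswap : Equiv.swap m (z m) = Equiv.swap (⟨i, by omega⟩ : Fin n) ⟨i + 1, h⟩ ∧
        ((w ⟨i, by omega⟩).val < p ↔ (w ⟨i + 1, h⟩).val < p) := by
      have hs := hsmall m
      rcases hmi with ⟨ha, hb⟩ | ⟨ha, hb⟩
      · have ha' : m = ⟨i, by omega⟩ := Fin.ext ha
        have hb' : z m = ⟨i + 1, h⟩ := Fin.ext hb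
        exact ⟨by rw [hb', ← ha'], by rw [← hb', ← ha']; exact hs.symm⟩
      · have ha' : m = ⟨i + 1, h⟩ := Fin.ext ha
        have hb' : z m = ⟨i, by omega⟩ := Fin.ext hb
        exact ⟨by rw [← hb', ← ha', Equiv.swap_comm], by rw [← hb', ← ha']; exact hs⟩
    have hmem : Equiv.swap m (z m) ∈ Subgroup.closure {σ : Equiv.Perm (Fin n) |
        ∃ i ∈ I, ∃ h : i + 1 < n,
        ((w ⟨i, by omega⟩).val < p ↔ (w ⟨i + 1, h⟩).val < p) ∧
        σ = Equiv.swap (⟨i, by omega⟩ : Fin n) ⟨i + 1, h⟩} :=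
      Subgroup.subset_closure ⟨i, hi, h, hswap.2, hswap.1⟩
    have hpair : MovesInPairs I (Equiv.swap m (z m)) := by
      rw [hswap.1]; exact movesInPairs_swap hi h
    have hlt := Equiv.Perm.card_support_swap_mul hm
    rw [hc] at hlt
    have hrest := ih _ hlt (Equiv.swap m (z m) * z) (hpair.mul hdist hz)
      (fun k => by rw [Equiv.Perm.mul_apply, small_iff_of_mem_closure hmem, hsmall]) rfl
    exact (Subgroup.mul_mem_cancel_left _ hmem).1 hrest

lemma Wv_prefix {n r p : ℕ} {ps qs : ℕ → ℕ} {w : Equiv.Perm (Fin n)}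
    (hw : w ∈ Wv n r p ps qs) (j : ℕ) (hj : j ≤ r) :
    (Finset.univ.filter fun m : Fin n =>
      m.val < blockStart ps qs j ∧ (w m).val < p).card = ∑ t ∈ Finset.range j, ps t := by
  induction j with
  | zero => simp [blockStart]
  | succ j ih =>
    have hle : blockStart ps qs j ≤ blockStart ps qs (j + 1) := by
      unfold blockStart; rw [Finset.sum_range_succ]; omega
    rw [Finset.sum_range_succ, ← ih (by omega), ← hw j (by omega),
      ← Finset.card_union_of_disjoint]
    · congr 1
      ext m
      simp only [Finset.mem_filter, Finset.mem_union, Finset.mem_univ, true_and]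
      omega
    · rw [Finset.disjoint_left]
      intro m
      simp only [Finset.mem_filter, Finset.mem_univ, true_and]
      omega

/-- If `z` swaps `a` and `b = a + 1`, and `w`, `w * z` have equally many small values on the
positions `≤ a`, then `w a` and `w b` are both small or both not. -/
lemma small_iff_of_swapped {n p : ℕ} {I : Finset ℕ}
    (hdist : ∀ i ∈ I, ∀ j ∈ I, i ≠ j → i + 2 ≤ j ∨ j + 2 ≤ i)
    {w z : Equiv.Perm (Fin n)} (hz : MovesInPairs I z) {a b : Fin n} (ha : a.val ∈ I)
    (hb : b.val = a.val + 1) (hab : z a = b) (hba : z b = a)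
    (hcard : (Finset.univ.filter fun m : Fin n => m.val < b.val ∧ (w (z m)).val < p).card =
      (Finset.univ.filter fun m : Fin n => m.val < b.val ∧ (w m).val < p).card) :
    (w a).val < p ↔ (w b).val < p := by
  -- Reindex the count for `w * z` by `k = z m`.
  have hre : (Finset.univ.filter fun m : Fin n => m.val < b.val ∧ (w (z m)).val < p).card =
      (Finset.univ.filter fun k : Fin n => (z⁻¹ k).val < b.val ∧ (w k).val < p).card := by
    refine Finset.card_bij (fun m _ => z m) ?_ (fun x _ y _ hxy => z.injective hxy) ?_
    · intro m; simp
    · intro k hk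
      exact ⟨z⁻¹ k, by simpa using hk, by simp⟩
  -- The image of the positions `≤ a` agrees with them except that `a` is replaced by `b`.
  have himage : ∀ k, k ≠ a → k ≠ b → ((z⁻¹ k).val < b.val ↔ k.val < b.val) := by
    intro k hka hkb
    have h1 : z⁻¹ k ≠ a := fun h => hkb (by rw [← hab, ← h]; simp)
    have h2 : z⁻¹ k ≠ b := fun h => hka (by rw [← hba, ← h]; simp)
    have hk : z (z⁻¹ k) = k := z.apply_symm_apply k
    rcases hz (z⁻¹ k) with h | ⟨i, hi, h⟩
    · rw [hk] at h
      rw [← h]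
    · rw [hk] at h
      have hne : i ≠ a.val := by
        rintro rfl
        rcases h with h | h
        · exact h1 (Fin.ext h.1)
        · exact hka (Fin.ext h.2)
      have := hdist i hi _ ha hne
      omega
  have hza : z⁻¹ a = b := by rw [← hba]; simp
  have hzb : z⁻¹ b = a := by rw [← hab]; simp
  rw [hre] at hcard
  -- If exactly one of the two values were small, one counted set would properly contain the other.
  by_contra hne
  by_cases hwa : (w a).val < p
  · have hwb : ¬ (w b).val < p := fun h => hne (iff_of_true hwa h)
    refine absurd hcard (ne_of_lt (Finset.card_lt_card ?_))
    refine (Finset.ssubset_iff_of_subset ?_).2 ⟨a, by simp [hwa, hb],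
      by rw [Finset.mem_filter, hza]; omega⟩
    intro k
    simp only [Finset.mem_filter, Finset.mem_univ, true_and]
    rintro ⟨h1, h2⟩
    have hka : k ≠ a := by rintro rfl; rw [hza] at h1; omega
    have hkb : k ≠ b := by rintro rfl; exact hwb h2
    exact ⟨(himage k hka hkb).1 h1, h2⟩
  · have hwb : (w b).val < p := by
      by_contra h; exact hne (iff_of_false hwa h)
    refine absurd hcard.symm (ne_of_lt (Finset.card_lt_card ?_))
    refine (Finset.ssubset_iff_of_subset ?_).2 ⟨b,
      by rw [Finset.mem_filter, hzb]; exact ⟨Finset.mem_univ b, by omega, hwb⟩, by simp⟩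
    intro k
    simp only [Finset.mem_filter, Finset.mem_univ, true_and]
    rintro ⟨h1, h2⟩
    have hka : k ≠ a := by rintro rfl; exact hwa h2
    have hkb : k ≠ b := by rintro rfl; omega
    exact ⟨(himage k hka hkb).2 h1, h2⟩

/-- **Proposition 7.7 (key combinatorial step).**  Fix `n = p + q = n₁ + ⋯ + n_r` with
`n_j = p_j + q_j` and `p₁ + ⋯ + p_r = p`, and let `I` be a set of simple transpositions
with indices pairwise at distance at least `2`, each of which straddles two consecutive
blocks of positions.  For `w ∈ W(v₀)` let `I_w ⊆ I` consist of the `s_i ∈ I` such that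
`w(i)` and `w(i+1)` lie both in `{1,…,p}` or both in `{p+1,…,n}`.  Then for every
`w ∈ W(v₀)` and every `z` in the subgroup `W_I` generated by `I`:  `w z ∈ W(v₀)` if and
only if `z` lies in the subgroup `W_{I_w}` generated by `I_w`.
(Indices are 0-indexed: `s_i` swaps positions `i` and `i+1`.) -/
theorem wz_mem_Wv_iff_mem_WIw (n p r : ℕ) (ps qs : ℕ → ℕ)
    (hn : n = blockStart ps qs r)
    (hp : p = ∑ t ∈ Finset.range r, ps t)
    (I : Finset ℕ)
    (hIr : ∀ i ∈ I, i + 1 < n)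
    (hstr : ∀ i ∈ I, ∃ j, 0 < j ∧ j < r ∧ i + 1 = blockStart ps qs j)
    (hdist : ∀ i ∈ I, ∀ j ∈ I, i ≠ j → i + 2 ≤ j ∨ j + 2 ≤ i)
    (w : Equiv.Perm (Fin n)) (hw : w ∈ Wv n r p ps qs)
    (z : Equiv.Perm (Fin n))
    (hz : z ∈ Subgroup.closure {σ : Equiv.Perm (Fin n) | ∃ i ∈ I, ∃ h : i + 1 < n,
        σ = Equiv.swap (⟨i, by omega⟩ : Fin n) ⟨i + 1, h⟩}) :
    w * z ∈ Wv n r p ps qs ↔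
      z ∈ Subgroup.closure {σ : Equiv.Perm (Fin n) | ∃ i ∈ I, ∃ h : i + 1 < n,
        ((w ⟨i, by omega⟩).val < p ↔ (w ⟨i + 1, h⟩).val < p) ∧
        σ = Equiv.swap (⟨i, by omega⟩ : Fin n) ⟨i + 1, h⟩} := by
  have hpairs := movesInPairs_of_mem_closure hdist hz
  constructor
  · intro hwz
    refine mem_closure_of_movesInPairs hdist z hpairs fun m => ?_
    by_cases hm : z m = m
    · rw [hm]
    obtain ⟨i, hi, hmi⟩ := (hpairs m).resolve_left hm
    -- By disjointness of the pairs, `z` sends `z m` back to `m`.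
    have hback : z (z m) = m := by
      rcases hpairs (z m) with h | ⟨j, hj, h⟩
      · exact absurd (z.injective h) hm
      · have hij : i = j := by
          by_contra hne
          have := hdist i hi j hj hne
          omega
        apply Fin.ext
        omega
    obtain ⟨j, -, hjr, hij⟩ := hstr i hi
    have hcard := (Wv_prefix hwz j hjr.le).trans (Wv_prefix hw j hjr.le).symm
    rw [← hij] at hcard
    simp only [Equiv.Perm.mul_apply] at hcard
    rcases hmi with ⟨ha, hb⟩ | ⟨ha, hb⟩
    · exact (small_iff_of_swapped hdist hpairs (a := m) (b := z m) (by rwa [ha]) (by omega)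
        rfl hback (by rw [hb]; exact hcard)).symm
    · exact small_iff_of_swapped hdist hpairs (a := z m) (b := m) (by rwa [hb]) (by omega)
        hback rfl (by rw [ha]; exact hcard)
  · intro hzw j hj
    simp only [Equiv.Perm.mul_apply, small_iff_of_mem_closure hzw]
    exact hw j hj
end
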